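/- Pointwise continuous extension of boundary data: let Ω ⊂ ℝ^N be open bounded with Lipschitz boundary, g ∈ L¹(∂Ω), and suppose g is continuous at x₀ ∈ ∂Ω. Then there exists ψ ∈ BV(ℝ^N ∖ Ω̄) with trace g on ∂Ω such that lim_{r→0} ess sup_{y ∈ B(x₀,r)∖Ω̄} |ψ(y) − g(x₀)| = 0. -/

import Mathlib

open Set MeasureTheory Filter Topology
open scoped ENNReal

/-- The divergence of a vector field on `ℝᴺ`. -/
noncomputable def divN {N : ℕ} (w : EuclideanSpace ℝ (Fin N) → EuclideanSpace ℝ (Fin N))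
    (x : EuclideanSpace ℝ (Fin N)) : ℝ :=
  ∑ i : Fin N, fderiv ℝ w x (EuclideanSpace.single i 1) i

/-- The total variation of `ψ` over the open set `U`, via the sup formula. -/
noncomputable def TVsup {N : ℕ} (ψ : EuclideanSpace ℝ (Fin N) → ℝ)
    (U : Set (EuclideanSpace ℝ (Fin N))) : ℝ≥0∞ :=
  ⨆ w : {w : EuclideanSpace ℝ (Fin N) → EuclideanSpace ℝ (Fin N) //
      ContDiff ℝ 1 w ∧ HasCompactSupport w ∧ tsupport w ⊆ U ∧ ∀ x, ‖w x‖ ≤ 1},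
    ENNReal.ofReal (∫ x in U, ψ x * divN w.1 x)

/-- `ψ`, defined on the open set `U`, has BV boundary trace `g` on `∂U` with
respect to the surface measure `σ` (averaged a.e. characterization). -/
def HasTraceOn {N : ℕ} (ψ : EuclideanSpace ℝ (Fin N) → ℝ)
    (U : Set (EuclideanSpace ℝ (Fin N))) (g : EuclideanSpace ℝ (Fin N) → ℝ)
    (σ : Measure (EuclideanSpace ℝ (Fin N))) : Prop :=
  ∀ᵐ x ∂σ, Tendsto
    (fun r => (∫ y in Metric.ball x r ∩ U, |ψ y - g x|) /
      (volume (Metric.ball x r ∩ U)).toReal) (nhdsWithin 0 (Ioi 0)) (nhds 0)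

section helpers
variable {N : ℕ}

/-- Admissible test fields. -/
def Adm (U : Set (EuclideanSpace ℝ (Fin N)))
    (w : EuclideanSpace ℝ (Fin N) → EuclideanSpace ℝ (Fin N)) : Prop :=
  ContDiff ℝ 1 w ∧ HasCompactSupport w ∧ tsupport w ⊆ U ∧ ∀ x, ‖w x‖ ≤ 1

/-- The total variation of `ψ` on `U` is at most `C`. -/
def BVb (ψ : EuclideanSpace ℝ (Fin N) → ℝ) (U : Set (EuclideanSpace ℝ (Fin N))) (C : ℝ) : Prop :=
  0 ≤ C ∧ ∀ w, Adm U w → ∫ x in U, ψ x * divN w x ≤ C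

lemma TVsup_lt_top_of_BVb {ψ : EuclideanSpace ℝ (Fin N) → ℝ}
    {U : Set (EuclideanSpace ℝ (Fin N))} {C : ℝ} (h : BVb ψ U C) : TVsup ψ U < ⊤ := by
  refine lt_of_le_of_lt (iSup_le fun w => ?_) (ENNReal.ofReal_lt_top (r := C))
  exact ENNReal.ofReal_le_ofReal (h.2 w.1 w.2)

lemma BVb_of_TVsup {ψ : EuclideanSpace ℝ (Fin N) → ℝ}
    {U : Set (EuclideanSpace ℝ (Fin N))} (h : TVsup ψ U < ⊤) : ∃ C, BVb ψ U C := by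
  refine ⟨(TVsup ψ U).toReal, ENNReal.toReal_nonneg, fun w hw => ?_⟩
  rw [← ENNReal.ofReal_le_iff_le_toReal h.ne]
  exact le_iSup (fun w : {w : EuclideanSpace ℝ (Fin N) → EuclideanSpace ℝ (Fin N) //
      ContDiff ℝ 1 w ∧ HasCompactSupport w ∧ tsupport w ⊆ U ∧ ∀ x, ‖w x‖ ≤ 1} =>
    ENNReal.ofReal (∫ x in U, ψ x * divN w.1 x)) ⟨w, hw⟩

lemma divN_continuous {w : EuclideanSpace ℝ (Fin N) → EuclideanSpace ℝ (Fin N)}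
    (hw : ContDiff ℝ 1 w) : Continuous (divN w) := by
  have h := hw.continuous_fderiv one_ne_zero
  unfold divN
  refine continuous_finsetSum _ fun i _ => ?_
  have h2 : Continuous fun x => fderiv ℝ w x (EuclideanSpace.single i 1) := h.clm_apply continuous_const
  fun_prop

lemma divN_eq_zero {w : EuclideanSpace ℝ (Fin N) → EuclideanSpace ℝ (Fin N)}
    {x : EuclideanSpace ℝ (Fin N)} (hx : x ∉ tsupport w) : divN w x = 0 := by
  have : fderiv ℝ w x = 0 := by
    by_contra h
    exact hx (support_fderiv_subset ℝ h)
  simp [divN, this]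

lemma divN_hasCompactSupport {w : EuclideanSpace ℝ (Fin N) → EuclideanSpace ℝ (Fin N)}
    (hw : HasCompactSupport w) : HasCompactSupport (divN w) :=
  HasCompactSupport.intro hw fun _ hx => divN_eq_zero hx

lemma divN_bdd {w : EuclideanSpace ℝ (Fin N) → EuclideanSpace ℝ (Fin N)}
    (hw : ContDiff ℝ 1 w) (hc : HasCompactSupport w) : ∃ C, ∀ x, ‖divN w x‖ ≤ C :=
  (divN_hasCompactSupport hc).exists_bound_of_continuous (divN_continuous hw)

lemma integrable_mul_divN {w : EuclideanSpace ℝ (Fin N) → EuclideanSpace ℝ (Fin N)}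
    (hw : ContDiff ℝ 1 w) (hc : HasCompactSupport w)
    {μ : Measure (EuclideanSpace ℝ (Fin N))}
    {ψ : EuclideanSpace ℝ (Fin N) → ℝ} (hψ : Integrable ψ μ) :
    Integrable (fun x => ψ x * divN w x) μ := by
  obtain ⟨C, hC⟩ := divN_bdd hw hc
  exact hψ.mul_bdd (divN_continuous hw).aestronglyMeasurable (Eventually.of_forall hC)

lemma divN_smul {w : EuclideanSpace ℝ (Fin N) → EuclideanSpace ℝ (Fin N)}
    (hw : ContDiff ℝ 1 w) {f : EuclideanSpace ℝ (Fin N) → ℝ} (hf : ContDiff ℝ 1 f)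
    (x : EuclideanSpace ℝ (Fin N)) :
    divN (fun y => f y • w y) x = f x * divN w x + fderiv ℝ f x (w x) := by
  have h1 := fderiv_fun_smul (hf.differentiable one_ne_zero x) (hw.differentiable one_ne_zero x)
  unfold divN
  rw [h1]
  have h2 : fderiv ℝ f x (w x)
      = ∑ i : Fin N, fderiv ℝ f x (EuclideanSpace.single i 1) * w x i := by
    conv_lhs => rw [← (EuclideanSpace.basisFun (Fin N) ℝ).sum_repr (w x)]
    simp [mul_comm]
  rw [h2, Finset.mul_sum, ← Finset.sum_add_distrib]
  refine Finset.sum_congr rfl fun i _ => ?_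
  simp

lemma integral_divN {w : EuclideanSpace ℝ (Fin N) → EuclideanSpace ℝ (Fin N)}
    (hw : ContDiff ℝ 1 w) (hc : HasCompactSupport w) : ∫ x, divN w x = 0 := by
  unfold divN
  have hfd := hw.continuous_fderiv one_ne_zero
  have key : ∀ i : Fin N, ∀ x, fderiv ℝ w x (EuclideanSpace.single i 1) i
      = fderiv ℝ (fun y => w y i) x (EuclideanSpace.single i 1) := by
    intro i x
    have h1 : HasFDerivAt (fun y => w y i)
        ((EuclideanSpace.proj i : EuclideanSpace ℝ (Fin N) →L[ℝ] ℝ).comp (fderiv ℝ w x)) x :=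
      (EuclideanSpace.proj i : EuclideanSpace ℝ (Fin N) →L[ℝ] ℝ).hasFDerivAt.comp x
        (hw.differentiable one_ne_zero x).hasFDerivAt
    rw [h1.fderiv]; rfl
  have hcs : ∀ i : Fin N, HasCompactSupport (fun y => w y i) := fun i =>
    hc.comp_left (g := fun v : EuclideanSpace ℝ (Fin N) => v i) rfl
  have hcd : ∀ i : Fin N, ContDiff ℝ 1 (fun y => w y i) := fun i =>
    (EuclideanSpace.proj i : EuclideanSpace ℝ (Fin N) →L[ℝ] ℝ).contDiff.comp hw
  have hint : ∀ i : Fin N, Integrable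
      (fun x => fderiv ℝ (fun y => w y i) x (EuclideanSpace.single i 1)) := by
    intro i
    refine Continuous.integrable_of_hasCompactSupport ?_ ?_
    · exact ((hcd i).continuous_fderiv one_ne_zero).clm_apply continuous_const
    · exact (hcs i).fderiv_apply ℝ _
  simp_rw [key]
  rw [integral_finsetSum _ fun i _ => hint i]
  refine Finset.sum_eq_zero fun i _ => ?_
  have := integral_mul_fderiv_eq_neg_fderiv_mul_of_integrable
    (μ := (volume : Measure (EuclideanSpace ℝ (Fin N))))
    (f := fun _ => (1:ℝ)) (g := fun y => w y i) (v := EuclideanSpace.single i 1)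
    (by simp) (by simpa using hint i)
    (by simpa using (hcd i).continuous.integrable_of_hasCompactSupport (hcs i))
    (by simp) (fun x _ => (hcd i).differentiable one_ne_zero x)
  simpa using this

lemma setIntegral_divN {U : Set (EuclideanSpace ℝ (Fin N))}
    {w : EuclideanSpace ℝ (Fin N) → EuclideanSpace ℝ (Fin N)} (hw : tsupport w ⊆ U)
    (ψ : EuclideanSpace ℝ (Fin N) → ℝ) :
    ∫ x in U, ψ x * divN w x = ∫ x, ψ x * divN w x :=
  setIntegral_eq_integral_of_forall_compl_eq_zero fun x hx => by
    rw [divN_eq_zero (fun h => hx (hw h)), mul_zero]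

lemma indicator_setIntegral_divN {U : Set (EuclideanSpace ℝ (Fin N))}
    {w : EuclideanSpace ℝ (Fin N) → EuclideanSpace ℝ (Fin N)} (hw : tsupport w ⊆ U)
    (ψ : EuclideanSpace ℝ (Fin N) → ℝ) :
    ∫ x in U, ψ x * divN w x = ∫ x, U.indicator ψ x * divN w x := by
  rw [setIntegral_divN hw]
  congr 1; ext x
  by_cases hx : x ∈ U
  · simp [hx]
  · rw [divN_eq_zero (fun h => hx (hw h))]; simp

lemma mollify_bound {U : Set (EuclideanSpace ℝ (Fin N))} (hU : IsOpen U)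
    {v : EuclideanSpace ℝ (Fin N) → ℝ} (hv : IntegrableOn v U) {C : ℝ} (hC : BVb v U C)
    {w : EuclideanSpace ℝ (Fin N) → EuclideanSpace ℝ (Fin N)}
    (hw : ContDiff ℝ 1 w) (hc : HasCompactSupport w) (hn : ∀ x, ‖w x‖ ≤ 1)
    {δ : ℝ} (hδ : Metric.thickening δ (tsupport w) ⊆ U)
    (φ : ContDiffBump (0 : EuclideanSpace ℝ (Fin N))) (hφ : φ.rOut < δ) :
    ∫ x, (convolution (φ.normed volume) (U.indicator v) (ContinuousLinearMap.lsmul ℝ ℝ) volume) x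
      * divN w x ≤ C := by
  set V := U.indicator v with hV
  have hVi : Integrable V := hv.integrable_indicator hU.measurableSet
  set k := φ.normed (volume : Measure (EuclideanSpace ℝ (Fin N))) with hk
  have hki : Integrable k := φ.integrable_normed
  obtain ⟨D, hD⟩ := divN_bdd hw hc
  have hprod : Integrable (Function.uncurry fun x t : EuclideanSpace ℝ (Fin N) =>
      (k t * V (x - t)) * divN w x) (volume.prod volume) := by
    have h1 : Integrable (fun p : EuclideanSpace ℝ (Fin N) × EuclideanSpace ℝ (Fin N) =>
        k p.2 * V (p.1 - p.2)) (volume.prod volume) :=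
      Integrable.convolution_integrand (ContinuousLinearMap.lsmul ℝ ℝ) hki hVi
    have h3 : Continuous (fun p : EuclideanSpace ℝ (Fin N) × EuclideanSpace ℝ (Fin N) =>
        divN w p.1) := (divN_continuous hw).comp continuous_fst
    exact h1.mul_bdd (c := D) h3.aestronglyMeasurable (Eventually.of_forall fun p => hD p.1)
  have e1 : ∫ x, (convolution k V (ContinuousLinearMap.lsmul ℝ ℝ) volume) x * divN w x
      = ∫ x, ∫ t, (k t * V (x - t)) * divN w x := by
    congr 1; ext x
    rw [integral_mul_const]
    rfl
  rw [e1, integral_integral_swap hprod]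
  have hI := hprod.integral_prod_right
  have hle : ∀ t, ∫ x, (k t * V (x - t)) * divN w x ≤ k t * C := by
    intro t
    have e2 : ∫ x, (k t * V (x - t)) * divN w x = k t * ∫ x, V (x - t) * divN w x := by
      rw [← integral_const_mul]; congr 1; ext x; ring
    rw [e2]
    by_cases ht : k t = 0
    · simp [ht]
    have ht' : ‖t‖ < δ := by
      have : t ∈ Function.support k := ht
      rw [hk, φ.support_normed_eq] at this
      have := mem_ball_zero_iff.1 this
      linarith
    refine mul_le_mul_of_nonneg_left ?_ (φ.nonneg_normed t)
    have e3 : ∫ x, V (x - t) * divN w x = ∫ x, V x * divN (fun y => w (y + t)) x := by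
      rw [← integral_add_right_eq_self (fun x => V (x - t) * divN w x) t]
      congr 1; ext x
      simp [divN, fderiv_comp_add_right]
    have hts : tsupport (fun y => w (y + t)) ⊆ U := by
      intro y hy
      have h1 : y + t ∈ tsupport w :=
        tsupport_comp_subset_preimage w (f := fun y => y + t) (by fun_prop) hy
      refine hδ (Metric.mem_thickening_iff.2 ⟨y + t, h1, ?_⟩)
      simpa [dist_eq_norm] using ht'
    rw [e3, ← indicator_setIntegral_divN hts]
    refine hC.2 _ ⟨hw.comp (by fun_prop), ?_, hts, fun x => hn _⟩
    exact hc.comp_homeomorph (Homeomorph.addRight t)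
  calc _ ≤ ∫ t, k t * C := integral_mono hI (hki.mul_const C) hle
    _ = C := by rw [integral_mul_const, hk, φ.integral_normed, one_mul]

lemma BVb_comp {U : Set (EuclideanSpace ℝ (Fin N))} (hU : IsOpen U)
    {v : EuclideanSpace ℝ (Fin N) → ℝ} (hv : IntegrableOn v U) {C : ℝ} (hC : BVb v U C)
    {F F1 : ℝ → ℝ} (hF : ∀ t, HasDerivAt F (F1 t) t) (hF1 : ContDiff ℝ 1 F1)
    (hb1 : ∀ t, |F1 t| ≤ 1) {M : ℝ} (hM : ∀ t, |F t| ≤ M) :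
    BVb (fun x => F (v x)) U C := by
  refine ⟨hC.1, fun w hw => ?_⟩
  obtain ⟨hw1, hwc, hwU, hwn⟩ := hw
  obtain ⟨δ, hδ0, hδ⟩ := IsCompact.exists_thickening_subset_open hwc hU hwU
  set V := U.indicator v with hV
  have hVi : Integrable V := hv.integrable_indicator hU.measurableSet
  have hFd : Differentiable ℝ F := fun t => (hF t).differentiableAt
  have hFderiv : deriv F = F1 := funext fun t => (hF t).deriv
  have hFc : ContDiff ℝ 1 F := by
    rw [contDiff_one_iff_deriv]
    exact ⟨hFd, by rw [hFderiv]; exact hF1.continuous⟩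
  let φ : ℕ → ContDiffBump (0 : EuclideanSpace ℝ (Fin N)) := fun n =>
    ⟨δ / (n + 2) / 2, δ / (n + 2), by positivity, half_lt_self (by positivity)⟩
  let Vn : ℕ → EuclideanSpace ℝ (Fin N) → ℝ := fun n =>
    convolution ((φ n).normed volume) V (ContinuousLinearMap.lsmul ℝ ℝ) volume
  have hVn : ∀ n, ContDiff ℝ 1 (Vn n) := fun n =>
    HasCompactSupport.contDiff_convolution_left (n := 1) _ (φ n).hasCompactSupport_normed
      (φ n).contDiff_normed hVi.locallyIntegrable
  have hlim0 : Tendsto (fun n : ℕ => δ / ((n : ℝ) + 2)) atTop (𝓝 0) := by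
    have h := tendsto_const_nhds (x := δ) |>.div_atTop
      (tendsto_atTop_add_const_right atTop (2:ℝ) (tendsto_natCast_atTop_atTop (R := ℝ)))
    exact h
  have hae : ∀ᵐ x, Tendsto (fun n => Vn n x) atTop (𝓝 (V x)) :=
    ContDiffBump.ae_convolution_tendsto_right_of_locallyIntegrable (K := 2) hlim0
      (Eventually.of_forall fun n => by
        change δ / ((n:ℝ) + 2) ≤ 2 * (δ / ((n:ℝ) + 2) / 2); linarith) hVi.locallyIntegrable
  have hbound : ∀ n, ∫ x, F (Vn n x) * divN w x ≤ C := by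
    intro n
    have hA : ContDiff ℝ 1 (fun x => F1 (Vn n x)) := hF1.comp (hVn n)
    have hB : ContDiff ℝ 1 (fun x => F (Vn n x)) := hFc.comp (hVn n)
    have hG : ContDiff ℝ 1 (fun x => Vn n x * F1 (Vn n x) - F (Vn n x)) :=
      ((hVn n).mul hA).sub hB
    have hsub : tsupport (fun x => F1 (Vn n x) • w x) ⊆ tsupport w :=
      tsupport_smul_subset_right (fun x => F1 (Vn n x)) w
    have h1 := mollify_bound hU hv hC (w := fun x => F1 (Vn n x) • w x) (hA.smul hw1)
      (hwc.smul_left (f := fun x => F1 (Vn n x)))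
      (fun x => by
        rw [norm_smul]
        exact mul_le_one₀ (hb1 _) (norm_nonneg _) (hwn x))
      (δ := δ) ((Metric.thickening_subset_of_subset _ hsub).trans hδ) (φ n)
      (by
        change δ / ((n:ℝ) + 2) < δ
        rw [div_lt_iff₀ (by positivity)]
        have : (0:ℝ) ≤ n := n.cast_nonneg
        nlinarith)
    change ∫ x, Vn n x * divN (fun x => F1 (Vn n x) • w x) x ≤ C at h1
    have hc2 : HasCompactSupport (fun x => (Vn n x * F1 (Vn n x) - F (Vn n x)) • w x) :=
      hwc.smul_left (f := fun x => (Vn n x * F1 (Vn n x) - F (Vn n x)))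
    have h0 : ∫ x, divN (fun x => (Vn n x * F1 (Vn n x) - F (Vn n x)) • w x) x = 0 :=
      integral_divN (hG.smul hw1) hc2
    have hpt : ∀ x, F (Vn n x) * divN w x = Vn n x * divN (fun x => F1 (Vn n x) • w x) x
        - divN (fun x => (Vn n x * F1 (Vn n x) - F (Vn n x)) • w x) x := by
      intro x
      rw [divN_smul hw1 hA, divN_smul hw1 hG]
      have hd := (hVn n).differentiable one_ne_zero x
      have hdA := hA.differentiable one_ne_zero x
      have hFV : HasFDerivAt (fun x => F (Vn n x)) (F1 (Vn n x) • fderiv ℝ (Vn n) x) x :=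
        (hF (Vn n x)).comp_hasFDerivAt x hd.hasFDerivAt
      have e : HasFDerivAt (fun x => Vn n x * F1 (Vn n x) - F (Vn n x))
        (Vn n x • fderiv ℝ (fun x => F1 (Vn n x)) x + F1 (Vn n x) • fderiv ℝ (Vn n) x
          - F1 (Vn n x) • fderiv ℝ (Vn n) x) x :=
        (hd.hasFDerivAt.mul hdA.hasFDerivAt).sub hFV
      rw [e.fderiv]
      simp
      ring
    simp_rw [hpt]
    rw [integral_sub, h0, sub_zero]
    · exact h1
    · refine Continuous.integrable_of_hasCompactSupport ?_ ?_
      · exact (hVn n).continuous.mul (divN_continuous (hA.smul hw1))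
      · exact (divN_hasCompactSupport (hwc.smul_left (f := fun x => F1 (Vn n x)))).mul_left
    · exact (divN_continuous (hG.smul hw1)).integrable_of_hasCompactSupport
        (divN_hasCompactSupport hc2)
  have hconv : Tendsto (fun n => ∫ x, F (Vn n x) * divN w x) atTop
      (𝓝 (∫ x, F (V x) * divN w x)) := by
    refine tendsto_integral_of_dominated_convergence (fun x => M * ‖divN w x‖) ?_ ?_ ?_ ?_
    · intro n
      exact ((hFc.continuous.comp (hVn n).continuous).mul
        (divN_continuous hw1)).aestronglyMeasurable
    · exact (((divN_continuous hw1).integrable_of_hasCompactSupport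
        (divN_hasCompactSupport hwc)).norm).const_mul M
    · intro n
      refine Eventually.of_forall fun x => ?_
      rw [norm_mul]
      exact mul_le_mul_of_nonneg_right (hM _) (norm_nonneg _)
    · filter_upwards [hae] with x hx
      exact ((hFc.continuous.tendsto _).comp hx).mul_const _
  have hfin := le_of_tendsto' hconv hbound
  rw [setIntegral_divN hwU]
  refine le_of_eq_of_le ?_ hfin
  congr 1
  ext x
  by_cases hx : x ∈ U
  · simp [hV, hx]
  · rw [divN_eq_zero (fun h => hx (hwU h))]; simp

lemma BVb_abs {U : Set (EuclideanSpace ℝ (Fin N))} (hU : IsOpen U)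
    {v : EuclideanSpace ℝ (Fin N) → ℝ} (hv : IntegrableOn v U) {C : ℝ} (hC : BVb v U C) :
    BVb (fun x => |v x|) U C := by
  let G : ℝ → ℝ → ℝ := fun a t => √(t ^ 2 + a ^ 2)
  let F : ℝ → ℝ → ℝ := fun a t => G a t / (1 + a * G a t)
  have hGpos : ∀ a > 0, ∀ t, 0 < G a t := fun a ha t => Real.sqrt_pos.2 (by positivity)
  have hGab : ∀ a > 0, ∀ t, |t| ≤ G a t := fun a ha t => by
    rw [← Real.sqrt_sq_eq_abs]; exact Real.sqrt_le_sqrt (by nlinarith [sq_nonneg a])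
  have hGle : ∀ a > 0, ∀ t, G a t ≤ |t| + a := fun a ha t => by
    apply Real.sqrt_le_iff.2
    refine ⟨by positivity, ?_⟩
    nlinarith [sq_abs t, mul_nonneg (abs_nonneg t) ha.le]
  have hGc : ∀ a > 0, ContDiff ℝ 1 (G a) := fun a ha =>
    ContDiff.sqrt (by fun_prop) fun t => by positivity
  have hGd : ∀ a > 0, ∀ t, HasDerivAt (G a) (t / G a t) t := fun a ha t => by
    have h : HasDerivAt (fun t : ℝ => t ^ 2 + a ^ 2) (2 * t) t := by
      simpa using (hasDerivAt_pow 2 t).add_const (a ^ 2)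
    have h2 := h.sqrt (by positivity)
    convert h2 using 1
    change t / √(t ^ 2 + a ^ 2) = _
    field_simp
  have hFd : ∀ a > 0, ∀ t, HasDerivAt (F a) ((t / G a t) / (1 + a * G a t) ^ 2) t := by
    intro a ha t
    have hp := hGpos a ha t
    have h := (hGd a ha t).div (((hGd a ha t).const_mul a).const_add 1)
      (by have := hGpos a ha t; positivity)
    have e : (t / G a t) / (1 + a * G a t) ^ 2
        = (t / G a t * (1 + a * G a t) - G a t * (a * (t / G a t))) / (1 + a * G a t) ^ 2 := by
      congr 1
      ring
    rw [e]
    exact h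
  have hF1 : ∀ a > 0, ContDiff ℝ 1 fun t => (t / G a t) / (1 + a * G a t) ^ 2 := by
    intro a ha
    have := hGc a ha
    refine ContDiff.div (ContDiff.div contDiff_id this fun t => (hGpos a ha t).ne') (by fun_prop) ?_
    intro t
    have := hGpos a ha t
    positivity
  have hFb1 : ∀ a > 0, ∀ t, |(t / G a t) / (1 + a * G a t) ^ 2| ≤ 1 := by
    intro a ha t
    have hp := hGpos a ha t
    rw [abs_div, abs_div, abs_of_pos hp, abs_of_pos (by positivity : 0 < (1 + a * G a t) ^ 2)]
    have h1 : |t| / G a t ≤ 1 := (div_le_one hp).2 (hGab a ha t)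
    have h2 : 1 ≤ (1 + a * G a t) ^ 2 := one_le_pow₀ (by nlinarith)
    exact div_le_one_of_le₀ (h1.trans h2) (by positivity)
  have hFnn : ∀ a > 0, ∀ t, 0 ≤ F a t := fun a ha t => by
    have hp := hGpos a ha t
    positivity
  have hFM : ∀ a > 0, ∀ t, |F a t| ≤ 1 / a := fun a ha t => by
    have hp := hGpos a ha t
    rw [abs_of_nonneg (hFnn a ha t)]
    change G a t / (1 + a * G a t) ≤ 1 / a
    rw [div_le_div_iff₀ (by positivity) ha]
    linarith
  have hFle : ∀ a > 0, ∀ t, |F a t| ≤ |t| + a := fun a ha t => by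
    have hp := hGpos a ha t
    rw [abs_of_nonneg (hFnn a ha t)]
    refine le_trans (div_le_self hp.le (by nlinarith)) (hGle a ha t)
  have hFlim : ∀ t, Tendsto (fun n : ℕ => F (1 / ((n:ℝ) + 1)) t) atTop (𝓝 |t|) := by
    intro t
    have hc : ContinuousAt (fun a => F a t) 0 := by
      have : ContinuousAt (fun a => G a t) 0 := by
        change ContinuousAt (fun a => √(t ^ 2 + a ^ 2)) 0
        fun_prop
      exact this.div (by fun_prop) (by simp)
    have h := hc.tendsto.comp (tendsto_one_div_add_atTop_nhds_zero_nat (𝕜 := ℝ))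
    have e : F 0 t = |t| := by simp [F, G, Real.sqrt_sq_eq_abs]
    rw [e] at h
    exact h
  refine ⟨hC.1, fun w hw => ?_⟩
  have hpos : ∀ n : ℕ, (0:ℝ) < 1 / ((n:ℝ) + 1) := fun n => by positivity
  have hle1 : ∀ n : ℕ, 1 / ((n:ℝ) + 1) ≤ 1 := fun n => by
    rw [div_le_one (by positivity)]
    have : (0:ℝ) ≤ n := n.cast_nonneg
    linarith
  have hb : ∀ n : ℕ, ∫ x in U, F (1 / ((n:ℝ) + 1)) (v x) * divN w x ≤ C := fun n =>
    (BVb_comp hU hv hC (hFd _ (hpos n)) (hF1 _ (hpos n)) (hFb1 _ (hpos n)) (hFM _ (hpos n))).2 w hw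
  refine le_of_tendsto' (tendsto_integral_of_dominated_convergence
    (fun x => ‖v x * divN w x‖ + ‖divN w x‖) ?_ ?_ ?_ ?_) hb
  · intro n
    have hcF : Continuous (F (1 / ((n:ℝ) + 1))) :=
      continuous_iff_continuousAt.2 fun t => (hFd _ (hpos n) t).continuousAt
    exact (hcF.comp_aestronglyMeasurable hv.aestronglyMeasurable).mul
      (divN_continuous hw.1).aestronglyMeasurable
  · refine (integrable_mul_divN hw.1 hw.2.1 hv).norm.add ?_
    exact ((divN_continuous hw.1).integrable_of_hasCompactSupport
        (divN_hasCompactSupport hw.2.1)).norm.integrableOn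
  · intro n
    refine Eventually.of_forall fun x => ?_
    rw [norm_mul, norm_mul]
    have h1 := hFle _ (hpos n) (v x)
    have h2 := hle1 n
    have h3 := norm_nonneg (divN w x)
    simp only [Real.norm_eq_abs] at *
    nlinarith
  · exact Eventually.of_forall fun x => (hFlim (v x)).mul_const _

lemma BVb_add {U : Set (EuclideanSpace ℝ (Fin N))}
    {u v : EuclideanSpace ℝ (Fin N) → ℝ} (hu : IntegrableOn u U) (hv : IntegrableOn v U)
    {A B : ℝ} (hA : BVb u U A) (hB : BVb v U B) : BVb (fun x => u x + v x) U (A + B) := by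
  refine ⟨add_nonneg hA.1 hB.1, fun w hw => ?_⟩
  simp_rw [add_mul]
  rw [integral_add (integrable_mul_divN hw.1 hw.2.1 hu) (integrable_mul_divN hw.1 hw.2.1 hv)]
  exact add_le_add (hA.2 w hw) (hB.2 w hw)

lemma BVb_neg {U : Set (EuclideanSpace ℝ (Fin N))}
    {u : EuclideanSpace ℝ (Fin N) → ℝ} {A : ℝ} (hA : BVb u U A) : BVb (fun x => - u x) U A := by
  refine ⟨hA.1, fun w hw => ?_⟩
  have hw' : Adm U (fun x => - w x) := by
    refine ⟨hw.1.neg, hw.2.1.neg, ?_, fun x => by simpa using hw.2.2.2 x⟩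
    have : tsupport (fun x => - w x) = tsupport w := by
      simp only [tsupport]; congr 1; ext x; simp
    rw [this]; exact hw.2.2.1
  have h := hA.2 _ hw'
  have e : ∀ x, divN (fun x => - w x) x = - divN w x := fun x => by
    simp [divN, fderiv_fun_neg]
  simp_rw [e] at h
  simpa using h

lemma BVb_nonneg_mul {U : Set (EuclideanSpace ℝ (Fin N))}
    {u : EuclideanSpace ℝ (Fin N) → ℝ} {A : ℝ} (hA : BVb u U A) {c : ℝ} (hc : 0 ≤ c) :
    BVb (fun x => c * u x) U (c * A) := by
  refine ⟨mul_nonneg hc hA.1, fun w hw => ?_⟩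
  simp_rw [mul_assoc]
  rw [integral_const_mul]
  exact mul_le_mul_of_nonneg_left (hA.2 w hw) hc

lemma BVb_const_mul {U : Set (EuclideanSpace ℝ (Fin N))}
    {u : EuclideanSpace ℝ (Fin N) → ℝ} {A : ℝ} (hA : BVb u U A) (c : ℝ) :
    BVb (fun x => c * u x) U (|c| * A) := by
  rcases le_total 0 c with h | h
  · rw [abs_of_nonneg h]; exact BVb_nonneg_mul hA h
  · rw [abs_of_nonpos h]
    have := BVb_neg (BVb_nonneg_mul hA (neg_nonneg.2 h))
    simpa using this

lemma BVb_smooth (U : Set (EuclideanSpace ℝ (Fin N)))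
    {f : EuclideanSpace ℝ (Fin N) → ℝ} (hf : ContDiff ℝ 1 f) (hc : HasCompactSupport f) :
    BVb f U (∫ x, ‖fderiv ℝ f x‖) := by
  refine ⟨integral_nonneg fun x => norm_nonneg _, fun w hw => ?_⟩
  rw [setIntegral_divN hw.2.2.1]
  have hfd := hf.continuous_fderiv one_ne_zero
  have hi : Integrable fun x => ‖fderiv ℝ f x‖ :=
    (hfd.integrable_of_hasCompactSupport (hc.fderiv ℝ)).norm
  have hi2 : Integrable fun x => fderiv ℝ f x (w x) := by
    refine hi.mono' (hfd.clm_apply hw.1.continuous).aestronglyMeasurable ?_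
    refine Eventually.of_forall fun x => ?_
    calc _ ≤ ‖fderiv ℝ f x‖ * ‖w x‖ := (fderiv ℝ f x).le_opNorm _
      _ ≤ _ := mul_le_of_le_one_right (norm_nonneg _) (hw.2.2.2 x)
  have h0 : ∫ x, divN (fun x => f x • w x) x = 0 :=
    integral_divN (hf.smul hw.1) (hw.2.1.smul_left (f := f))
  simp_rw [divN_smul hw.1 hf] at h0
  rw [integral_add (integrable_mul_divN hw.1 hw.2.1
    (hf.continuous.integrable_of_hasCompactSupport hc)) hi2] at h0
  have h3 : -∫ x, fderiv ℝ f x (w x) ≤ ∫ x, ‖fderiv ℝ f x‖ := by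
    rw [← integral_neg]
    refine integral_mono hi2.neg hi fun x => ?_
    calc -(fderiv ℝ f x (w x)) ≤ ‖fderiv ℝ f x (w x)‖ := neg_le_abs _
      _ ≤ ‖fderiv ℝ f x‖ * ‖w x‖ := (fderiv ℝ f x).le_opNorm _
      _ ≤ _ := mul_le_of_le_one_right (norm_nonneg _) (hw.2.2.2 x)
  linarith

lemma BVb_mul {U : Set (EuclideanSpace ℝ (Fin N))}
    {u χ : EuclideanSpace ℝ (Fin N) → ℝ} (hu : IntegrableOn u U) {A : ℝ} (hA : BVb u U A)
    (hχ : ContDiff ℝ 1 χ) (hχ1 : ∀ x, |χ x| ≤ 1) (hχc : HasCompactSupport χ) :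
    ∃ C, BVb (fun x => χ x * u x) U C := by
  have hfd := hχ.continuous_fderiv one_ne_zero
  obtain ⟨K, hK⟩ := (hχc.fderiv ℝ).exists_bound_of_continuous hfd
  have hK0 : 0 ≤ K := (norm_nonneg _).trans (hK 0)
  refine ⟨A + ∫ x in U, K * |u x|, add_nonneg hA.1
    (integral_nonneg fun x => by positivity), fun w hw => ?_⟩
  have h1 : ∫ x in U, u x * divN (fun y => χ y • w y) x ≤ A := by
    refine hA.2 _ ⟨hχ.smul hw.1, hw.2.1.smul_left (f := χ),
      (tsupport_smul_subset_right χ w).trans hw.2.2.1, fun x => ?_⟩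
    rw [norm_smul]
    exact mul_le_one₀ (hχ1 x) (norm_nonneg _) (hw.2.2.2 x)
  have hpt : ∀ x, |fderiv ℝ χ x (w x)| ≤ K := fun x =>
    calc |fderiv ℝ χ x (w x)| ≤ ‖fderiv ℝ χ x‖ * ‖w x‖ := (fderiv ℝ χ x).le_opNorm _
      _ ≤ ‖fderiv ℝ χ x‖ := mul_le_of_le_one_right (norm_nonneg _) (hw.2.2.2 x)
      _ ≤ K := hK x
  have hi1 : IntegrableOn (fun x => u x * fderiv ℝ χ x (w x)) U :=
    hu.mul_bdd (c := K) (hfd.clm_apply hw.1.continuous).aestronglyMeasurable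
      (Eventually.of_forall hpt)
  have hi2 : IntegrableOn (fun x => u x * divN (fun y => χ y • w y) x) U :=
    integrable_mul_divN (hχ.smul hw.1) (hw.2.1.smul_left (f := χ)) hu
  have e : ∀ x, χ x * u x * divN w x
      = u x * divN (fun y => χ y • w y) x - u x * fderiv ℝ χ x (w x) := fun x => by
    rw [divN_smul hw.1 hχ]; ring
  simp_rw [e]
  rw [integral_sub hi2 hi1, sub_eq_add_neg, ← integral_neg]
  refine add_le_add h1 (integral_mono hi1.neg (hu.norm.const_mul K) fun x => ?_)
  calc -(u x * fderiv ℝ χ x (w x)) ≤ |u x * fderiv ℝ χ x (w x)| := neg_le_abs _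
    _ = |u x| * |fderiv ℝ χ x (w x)| := abs_mul _ _
    _ ≤ |u x| * K := mul_le_mul_of_nonneg_left (hpt x) (abs_nonneg _)
    _ = K * ‖u x‖ := mul_comm _ _

lemma BVb_tsum {U : Set (EuclideanSpace ℝ (Fin N))}
    {f : ℕ → EuclideanSpace ℝ (Fin N) → ℝ} {η : EuclideanSpace ℝ (Fin N) → ℝ}
    (hf : ∀ n, Continuous (f n)) (hη : IntegrableOn η U)
    (hfη : ∀ n x, |f n x| ≤ η x) {K : ℝ} (hK : ∀ n, BVb (f n) U K) :
    BVb (fun x => ∑' n, (1 / 2 : ℝ) ^ n * f n x) U (2 * K) := by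
  refine ⟨mul_nonneg (by norm_num) (hK 0).1, fun w hw => ?_⟩
  have hfi : ∀ n, IntegrableOn (f n) U := fun n =>
    hη.mono' (hf n).aestronglyMeasurable (Eventually.of_forall (hfη n))
  have hI : ∀ n, Integrable (fun x => (1 / 2 : ℝ) ^ n * f n x * divN w x) (volume.restrict U) :=
    fun n => integrable_mul_divN hw.1 hw.2.1 ((hfi n).const_mul _)
  have hηd : Integrable (fun x => ‖η x * divN w x‖) (volume.restrict U) :=
    (integrable_mul_divN hw.1 hw.2.1 hη).norm
  have hS : Summable fun n => ∫ x in U, ‖(1 / 2 : ℝ) ^ n * f n x * divN w x‖ := by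
    refine Summable.of_nonneg_of_le (fun n => integral_nonneg fun x => norm_nonneg _) (fun n => ?_)
      (summable_geometric_two.mul_right (∫ x in U, ‖η x * divN w x‖))
    rw [← integral_const_mul]
    refine integral_mono (hI n).norm (hηd.const_mul _) fun x => ?_
    simp only [norm_mul, norm_pow, mul_assoc]
    have h1 : ‖(1 / 2 : ℝ)‖ = 1 / 2 := by norm_num
    rw [h1]
    refine mul_le_mul_of_nonneg_left (mul_le_mul_of_nonneg_right ?_ (norm_nonneg _)) (by positivity)
    exact (hfη n x).trans (le_abs_self _)
  have h := hasSum_integral_of_summable_integral_norm hI hS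
  simp_rw [tsum_mul_right] at h
  have h2 : HasSum (fun n => (1 / 2 : ℝ) ^ n * K) (2 * K) := hasSum_geometric_two.mul_right K
  refine hasSum_le (fun n => ?_) h h2
  exact (BVb_nonneg_mul (hK n) (by positivity)).2 w hw

/-- The basic bump function, scaled. -/
noncomputable def bmp (x₀ : EuclideanSpace ℝ (Fin N)) (r : ℝ) (x : EuclideanSpace ℝ (Fin N)) : ℝ :=
  (⟨1, 2, one_pos, one_lt_two⟩ : ContDiffBump (0 : EuclideanSpace ℝ (Fin N))) (r⁻¹ • (x - x₀))

lemma bmp_contDiff (x₀ : EuclideanSpace ℝ (Fin N)) (r : ℝ) : ContDiff ℝ 1 (bmp x₀ r) :=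
  (ContDiffBump.contDiff _).comp (by fun_prop)

lemma bmp_nonneg (x₀ : EuclideanSpace ℝ (Fin N)) (r : ℝ) (x) : 0 ≤ bmp x₀ r x :=
  ContDiffBump.nonneg _

lemma bmp_le_one (x₀ : EuclideanSpace ℝ (Fin N)) (r : ℝ) (x) : bmp x₀ r x ≤ 1 :=
  ContDiffBump.le_one _

lemma bmp_eq_one {x₀ : EuclideanSpace ℝ (Fin N)} {r : ℝ} (hr : 0 < r) {x} (hx : dist x x₀ ≤ r) :
    bmp x₀ r x = 1 := by
  apply ContDiffBump.one_of_mem_closedBall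
  rw [mem_closedBall_zero_iff, norm_smul, norm_inv, Real.norm_of_nonneg hr.le, ← dist_eq_norm]
  change r⁻¹ * dist x x₀ ≤ 1
  rw [inv_mul_le_iff₀ hr]; linarith

lemma bmp_eq_zero {x₀ : EuclideanSpace ℝ (Fin N)} {r : ℝ} (hr : 0 < r) {x}
    (hx : 2 * r ≤ dist x x₀) : bmp x₀ r x = 0 := by
  apply ContDiffBump.zero_of_le_dist
  rw [dist_zero_right, norm_smul, norm_inv, Real.norm_of_nonneg hr.le, ← dist_eq_norm]
  change 2 ≤ r⁻¹ * dist x x₀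
  rw [le_inv_mul_iff₀ hr]; linarith

lemma bmp_hasCompactSupport (x₀ : EuclideanSpace ℝ (Fin N)) {r : ℝ} (hr : 0 < r) :
    HasCompactSupport (bmp x₀ r) :=
  HasCompactSupport.intro (isCompact_closedBall x₀ (2 * r)) fun x hx =>
    bmp_eq_zero hr (by rw [Metric.mem_closedBall, not_le] at hx; exact hx.le)

lemma bmp_BVb (hN : 1 ≤ N) (x₀ : EuclideanSpace ℝ (Fin N)) (U : Set (EuclideanSpace ℝ (Fin N))) :
    ∃ K, ∀ r, 0 < r → r ≤ 1 → BVb (bmp x₀ r) U K := by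
  let b : ContDiffBump (0 : EuclideanSpace ℝ (Fin N)) := ⟨1, 2, one_pos, one_lt_two⟩
  have hb : ContDiff ℝ 1 b := b.contDiff
  obtain ⟨D, hD⟩ := (b.hasCompactSupport.fderiv ℝ).exists_bound_of_continuous
    (hb.continuous_fderiv one_ne_zero)
  have hD0 : 0 ≤ D := (norm_nonneg _).trans (hD 0)
  set c := (volume (Metric.ball (0 : EuclideanSpace ℝ (Fin N)) 1)).toReal
  refine ⟨D * 2 ^ N * c, fun r hr hr1 => ?_⟩
  have hs := BVb_smooth U (bmp_contDiff x₀ r) (bmp_hasCompactSupport x₀ hr)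
  suffices h : ∫ x, ‖fderiv ℝ (bmp x₀ r) x‖ ≤ D * 2 ^ N * c from
    ⟨hs.1.trans h, fun w hw => (hs.2 w hw).trans h⟩
  have hfd : ∀ x, ‖fderiv ℝ (bmp x₀ r) x‖ ≤ r⁻¹ * D := by
    intro x
    have h1 : HasFDerivAt (fun x => r⁻¹ • (x - x₀))
        (r⁻¹ • ContinuousLinearMap.id ℝ (EuclideanSpace ℝ (Fin N))) x :=
      ((hasFDerivAt_id x).sub_const x₀).const_smul r⁻¹
    have h2 : HasFDerivAt (bmp x₀ r) ((fderiv ℝ b (r⁻¹ • (x - x₀))).comp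
        (r⁻¹ • ContinuousLinearMap.id ℝ (EuclideanSpace ℝ (Fin N)))) x :=
      (hb.differentiable one_ne_zero _).hasFDerivAt.comp x h1
    rw [h2.fderiv, ContinuousLinearMap.comp_smul, ContinuousLinearMap.comp_id, norm_smul, norm_inv,
      Real.norm_of_nonneg hr.le]
    exact mul_le_mul_of_nonneg_left (hD _) (by positivity)
  have hz : ∀ x, x ∉ Metric.closedBall x₀ (2 * r) → ‖fderiv ℝ (bmp x₀ r) x‖ = 0 := by
    intro x hx
    have hts : tsupport (bmp x₀ r) ⊆ Metric.closedBall x₀ (2 * r) := by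
      refine closure_minimal (fun y hy => ?_) Metric.isClosed_closedBall
      by_contra h
      rw [Metric.mem_closedBall, not_le] at h
      exact hy (bmp_eq_zero hr h.le)
    rw [norm_eq_zero]
    by_contra h
    exact hx (hts (support_fderiv_subset ℝ h))
  rw [← setIntegral_eq_integral_of_forall_compl_eq_zero hz]
  have hfin : volume (Metric.closedBall x₀ (2 * r)) < ⊤ := measure_closedBall_lt_top
  have hle := norm_setIntegral_le_of_norm_le_const (f := fun x => ‖fderiv ℝ (bmp x₀ r) x‖)
    (C := r⁻¹ * D) hfin (fun x _ => by simpa using hfd x)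
  have hvol : volume.real (Metric.closedBall x₀ (2 * r)) = (2 * r) ^ N * c := by
    rw [Measure.real, Measure.addHaar_closedBall _ _ (by positivity), ENNReal.toReal_mul,
      ENNReal.toReal_ofReal (by positivity)]
    simp [c]
  rw [hvol] at hle
  refine (le_abs_self _).trans (hle.trans ?_)
  obtain ⟨m, rfl⟩ : ∃ m, N = m + 1 := ⟨N - 1, by omega⟩
  have e : r⁻¹ * D * ((2 * r) ^ (m + 1) * c) = D * 2 ^ (m + 1) * c * r ^ m := by
    rw [mul_pow, pow_succ r m]; field_simp
  rw [e]
  have hc0 : 0 ≤ c := ENNReal.toReal_nonneg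
  exact mul_le_of_le_one_right (by positivity) (pow_le_one₀ hr.le hr1)

lemma exists_barrier (hN : 1 ≤ N) (x₀ : EuclideanSpace ℝ (Fin N))
    (U : Set (EuclideanSpace ℝ (Fin N))) {R : ℝ} (hR : 1 ≤ R) {δ : ℕ → ℝ} (hδ : ∀ n, 0 < δ n) :
    ∃ h : EuclideanSpace ℝ (Fin N) → ℝ, Continuous h ∧ (∀ x, 0 ≤ h x) ∧ h x₀ = 0 ∧
      IntegrableOn h U ∧ (∃ C, BVb h U C) ∧
      ∀ n x, dist x x₀ ≤ R → δ (n + 1) ≤ dist x x₀ → (1 / 2 : ℝ) ^ n ≤ h x := by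
  have hR0 : 0 < R := by linarith
  obtain ⟨K, hK⟩ := bmp_BVb hN x₀ U
  let r : ℕ → ℝ := fun n => min (1 / 2) (δ (n + 1) / 2)
  have hr0 : ∀ n, 0 < r n := fun n => lt_min (by norm_num) (half_pos (hδ _))
  have hr1 : ∀ n, r n ≤ 1 / 2 := fun n => min_le_left _ _
  have hr2 : ∀ n, r n ≤ δ (n + 1) / 2 := fun n => min_le_right _ _
  set η := bmp x₀ R with hη
  let f : ℕ → EuclideanSpace ℝ (Fin N) → ℝ := fun n x => η x - bmp x₀ (r n) x
  have hηc : Continuous η := (bmp_contDiff x₀ R).continuous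
  have hηs : HasCompactSupport η := bmp_hasCompactSupport x₀ hR0
  have hηi : Integrable η := hηc.integrable_of_hasCompactSupport hηs
  have hf : ∀ n, Continuous (f n) := fun n => hηc.sub (bmp_contDiff x₀ (r n)).continuous
  have hf0 : ∀ n x, 0 ≤ f n x := by
    intro n x
    have h1 := bmp_le_one x₀ (r n) x
    have h2 := bmp_nonneg x₀ R x
    rcases le_total (dist x x₀) R with hx | hx
    · change 0 ≤ bmp x₀ R x - bmp x₀ (r n) x
      rw [bmp_eq_one hR0 hx]; linarith
    · change 0 ≤ bmp x₀ R x - bmp x₀ (r n) x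
      rw [bmp_eq_zero (hr0 n) (by linarith [hr1 n])]; linarith
  have hfη : ∀ n x, |f n x| ≤ η x := fun n x => by
    rw [abs_of_nonneg (hf0 n x)]
    have := bmp_nonneg x₀ (r n) x
    change η x - bmp x₀ (r n) x ≤ η x
    linarith
  have hη1 : ∀ x, η x ≤ 1 := bmp_le_one x₀ R
  have hBV : ∀ n, BVb (f n) U ((∫ x, ‖fderiv ℝ η x‖) + K) := fun n =>
    BVb_add hηi.integrableOn
      ((bmp_contDiff x₀ (r n)).continuous.integrable_of_hasCompactSupport
        (bmp_hasCompactSupport x₀ (hr0 n))).neg.integrableOn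
      (BVb_smooth U (bmp_contDiff x₀ R) hηs)
      (BVb_neg (hK (r n) (hr0 n) (by linarith [hr1 n])))
  have hterm : ∀ n x, ‖(1 / 2 : ℝ) ^ n * f n x‖ ≤ (1 / 2 : ℝ) ^ n := fun n x => by
    rw [norm_mul, Real.norm_of_nonneg (by positivity : (0:ℝ) ≤ (1 / 2) ^ n)]
    exact mul_le_of_le_one_right (by positivity) ((hfη n x).trans (hη1 x))
  have hsum : ∀ x, Summable fun n => (1 / 2 : ℝ) ^ n * f n x := fun x =>
    Summable.of_norm_bounded summable_geometric_two fun n => hterm n x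
  have hcont : Continuous fun x => ∑' n, (1 / 2 : ℝ) ^ n * f n x :=
    continuous_tsum (fun n => continuous_const.mul (hf n)) summable_geometric_two hterm
  have hnn : ∀ n x, 0 ≤ (1 / 2 : ℝ) ^ n * f n x := fun n x => mul_nonneg (by positivity) (hf0 n x)
  refine ⟨fun x => ∑' n, (1 / 2 : ℝ) ^ n * f n x, hcont, fun x => tsum_nonneg fun n => hnn n x,
    ?_, ?_, ⟨_, BVb_tsum hf hηi.integrableOn hfη hBV⟩, ?_⟩
  · have : ∀ n, f n x₀ = 0 := fun n => by
      change bmp x₀ R x₀ - bmp x₀ (r n) x₀ = 0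
      rw [bmp_eq_one hR0 (by simpa using hR0.le), bmp_eq_one (hr0 n) (by simpa using (hr0 n).le)]
      simp
    simp [this]
  · refine (hcont.integrable_of_hasCompactSupport ?_).integrableOn
    refine HasCompactSupport.intro hηs fun x hx => ?_
    have hx0 : η x = 0 := image_eq_zero_of_notMem_tsupport hx
    have : ∀ n, f n x = 0 := fun n => by
      have := hfη n x
      rw [hx0] at this
      exact abs_nonpos_iff.1 this
    simp [this]
  · intro n x hxR hxδ
    have h1 : f n x = 1 := by
      change bmp x₀ R x - bmp x₀ (r n) x = 1
      rw [bmp_eq_one hR0 hxR, bmp_eq_zero (hr0 n) (by linarith [hr2 n])]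
      simp
    have := (hsum x).le_tsum n fun j _ => hnn j x
    rw [h1, mul_one] at this
    exact this

lemma clamp_bound {u h a k : ℝ} (hh : 0 ≤ h) (hak : |a| ≤ k) :
    |(|u + h| - |u - h|) / 2 - u| ≤ 2 * |u - a| + |h - k| := by
  have e1 : (|a + k| - |a - k|) / 2 = a := by
    obtain ⟨h1, h2⟩ := abs_le.1 hak
    rw [abs_of_nonneg (by linarith : 0 ≤ a + k), abs_of_nonpos (by linarith : a - k ≤ 0)]
    ring
  have h1 : |(|u + h| - |a + k|)| ≤ |u - a| + |h - k| :=
    (abs_abs_sub_abs_le_abs_sub _ _).trans (by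
      rw [show u + h - (a + k) = (u - a) + (h - k) by ring]; exact abs_add_le _ _)
  have h2 : |(|u - h| - |a - k|)| ≤ |u - a| + |h - k| :=
    (abs_abs_sub_abs_le_abs_sub _ _).trans (by
      rw [show u - h - (a - k) = (u - a) - (h - k) by ring]; exact abs_sub _ _)
  have h3 := le_abs_self (u - a)
  have h4 := neg_abs_le (u - a)
  obtain ⟨h11, h12⟩ := abs_le.1 h1
  obtain ⟨h21, h22⟩ := abs_le.1 h2
  rw [abs_le]
  constructor <;> linarith

lemma clamp_le {u h : ℝ} (hh : 0 ≤ h) : |(|u + h| - |u - h|) / 2| ≤ h := by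
  have := abs_abs_sub_abs_le_abs_sub (u + h) (u - h)
  rw [show u + h - (u - h) = 2 * h by ring, abs_of_nonneg (by linarith : 0 ≤ 2 * h)] at this
  rw [abs_div, abs_two]
  linarith

end helpers

/-- Pointwise continuous extension of boundary data: if
`g ∈ L¹(∂Ω)` is continuous at `x₀ ∈ ∂Ω`, then there is `ψ ∈ BV(ℝᴺ∖Ω̄)` with trace
`g` on `∂Ω` such that `ess sup_{B(x₀,r)∖Ω̄} |ψ − g(x₀)| → 0` as `r → 0`. The
Gagliardo extension theorem (available for the Lipschitz domain `Ω`) is assumed. -/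
theorem pointwise_continuous_extension {N : ℕ}
    (Ω : Set (EuclideanSpace ℝ (Fin N))) (hΩo : IsOpen Ω) (hΩb : Bornology.IsBounded Ω)
    (σ : Measure (EuclideanSpace ℝ (Fin N)))
    (hσ : σ = (μH[(N : ℝ) - 1]).restrict (frontier Ω)) (hσfin : σ univ ≠ ⊤)
    (hgagliardo : ∀ g' : EuclideanSpace ℝ (Fin N) → ℝ, Integrable g' σ →
      ∃ ψ : EuclideanSpace ℝ (Fin N) → ℝ, IntegrableOn ψ (closure Ω)ᶜ ∧
        TVsup ψ (closure Ω)ᶜ < ⊤ ∧ HasTraceOn ψ (closure Ω)ᶜ g' σ)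
    (g : EuclideanSpace ℝ (Fin N) → ℝ) (hg : Integrable g σ)
    (x₀ : EuclideanSpace ℝ (Fin N)) (hx₀ : x₀ ∈ frontier Ω)
    (hcont : ∀ ε > (0:ℝ), ∃ δ > (0:ℝ), ∀ x ∈ frontier Ω, dist x x₀ < δ →
      |g x - g x₀| ≤ ε) :
    ∃ ψ : EuclideanSpace ℝ (Fin N) → ℝ, IntegrableOn ψ (closure Ω)ᶜ ∧
      TVsup ψ (closure Ω)ᶜ < ⊤ ∧ HasTraceOn ψ (closure Ω)ᶜ g σ ∧
      Tendsto (fun r => essSup (fun y => |ψ y - g x₀|)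
        (volume.restrict (Metric.ball x₀ r \ closure Ω)))
        (nhdsWithin 0 (Ioi 0)) (nhds 0) := by
  have hN : 1 ≤ N := by
    rcases Nat.eq_zero_or_pos N with rfl | h
    · exfalso
      rcases Ω.eq_empty_or_nonempty with h | h
      · simp [h] at hx₀
      · have : Ω = univ := Subsingleton.eq_univ_of_nonempty h
        simp [this] at hx₀
    · exact h
  set U := (closure Ω)ᶜ with hUdef
  have hU : IsOpen U := isClosed_closure.isOpen_compl
  have : IsFiniteMeasure σ := ⟨lt_top_iff_ne_top.2 hσfin⟩
  set g0 := g x₀ with hg0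
  -- the extension of `g - g(x₀)`
  obtain ⟨u, hui, huTV, hutr⟩ := hgagliardo (fun x => g x - g0) (hg.sub (integrable_const g0))
  obtain ⟨A, hA⟩ := BVb_of_TVsup huTV
  -- radii
  obtain ⟨R, hR1, hR⟩ : ∃ R : ℝ, 1 ≤ R ∧ closure Ω ⊆ Metric.ball x₀ R := by
    obtain ⟨R, hR⟩ := hΩb.closure.subset_ball x₀
    exact ⟨max R 1, le_max_right _ _, hR.trans (Metric.ball_subset_ball (le_max_left _ _))⟩
  have hR0 : 0 < R := by linarith
  choose δ hδ0 hδ using fun n : ℕ => hcont ((1 / 2 : ℝ) ^ n) (by positivity)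
  obtain ⟨h, hhc, hh0, hhx₀, hhi, ⟨B, hB⟩, hhge⟩ := exists_barrier hN x₀ U hR1 hδ0
  have hfrR : ∀ x ∈ frontier Ω, dist x x₀ < R := fun x hx => hR (frontier_subset_closure hx)
  have hgh : ∀ x ∈ frontier Ω, dist x x₀ < δ 0 → |g x - g0| ≤ h x := by
    intro x hx hx0
    by_cases hall : ∀ n, dist x x₀ < δ n
    · have h1 : |g x - g0| ≤ 0 :=
        ge_of_tendsto' (tendsto_pow_atTop_nhds_zero_of_lt_one (r := (1 / 2 : ℝ))
          (by norm_num) (by norm_num)) fun n => hδ n x hx (hall n)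
      exact h1.trans (hh0 x)
    · push Not at hall
      classical
      have hm := Nat.find_spec hall
      have hmin := fun k hk => Nat.find_min hall (m := k) hk
      generalize Nat.find hall = m at hm hmin
      rcases m with _ | n
      · linarith
      · have h1 := hmin n (Nat.lt_succ_self n)
        rw [not_le] at h1
        exact (hδ n x hx h1).trans (hhge n x (hfrR x hx).le hm)
  -- cutoffs
  set η := bmp x₀ R with hη
  set ρ := δ 0 / 4 with hρ
  have hρ0 : 0 < ρ := by have := hδ0 0; positivity
  set χ := bmp x₀ ρ with hχ
  have hηi : IntegrableOn η U := ((bmp_contDiff x₀ R).continuous.integrable_of_hasCompactSupport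
    (bmp_hasCompactSupport x₀ hR0)).integrableOn
  have hχc : Continuous χ := (bmp_contDiff x₀ ρ).continuous
  have hχ0 : ∀ x, 0 ≤ χ x := bmp_nonneg x₀ ρ
  have hχ1 : ∀ x, |χ x| ≤ 1 := fun x => by
    rw [abs_of_nonneg (hχ0 x)]; exact bmp_le_one x₀ ρ x
  let T : EuclideanSpace ℝ (Fin N) → ℝ := fun x => (1 / 2) * (|u x + h x| + -|u x + -h x|) + -u x
  have hT : ∀ x, T x = (|u x + h x| - |u x - h x|) / 2 - u x := fun x => by
    simp only [T, sub_eq_add_neg]; ring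
  have hp := hui.add hhi
  have hm := hui.add hhi.neg
  have hp' : IntegrableOn (fun x => |u x + h x|) U := hp.norm
  have hm' : IntegrableOn (fun x => -|u x + -h x|) U := hm.norm.neg
  have hTi : IntegrableOn T U := ((hp'.add hm').const_mul (1 / 2)).add hui.neg
  have hTBV : ∃ C, BVb T U C :=
    ⟨_, BVb_add ((hp'.add hm').const_mul (1 / 2)) hui.neg
      (BVb_const_mul (BVb_add hp' hm' (BVb_abs hU hp (BVb_add hui hhi hA hB))
        (BVb_neg (BVb_abs hU hm (BVb_add hui hhi.neg hA (BVb_neg hB))))) (1 / 2)) (BVb_neg hA)⟩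
  obtain ⟨CT, hCT⟩ := hTBV
  obtain ⟨Cχ, hCχ⟩ := BVb_mul hTi hCT (bmp_contDiff x₀ ρ) hχ1 (bmp_hasCompactSupport x₀ hρ0)
  have hχTi : IntegrableOn (fun x => χ x * T x) U :=
    hTi.bdd_mul (c := 1) hχc.aestronglyMeasurable (Eventually.of_forall hχ1)
  have hgη : IntegrableOn (fun x => g0 * η x) U := hηi.const_mul g0
  have hgηBV := BVb_const_mul (BVb_smooth U (bmp_contDiff x₀ R) (bmp_hasCompactSupport x₀ hR0)) g0
  refine ⟨fun x => (u x + χ x * T x) + g0 * η x, (hui.add hχTi).add hgη,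
    TVsup_lt_top_of_BVb (BVb_add (hui.add hχTi) hgη (BVb_add hui hχTi hA hCχ) hgηBV), ?_, ?_⟩
  · -- the trace
    have hfr : ∀ᵐ x ∂σ, x ∈ frontier Ω := by
      rw [hσ]; exact ae_restrict_mem isClosed_frontier.measurableSet
    unfold HasTraceOn at hutr ⊢
    filter_upwards [hfr, hutr] with x hx hux
    -- pointwise estimate near `x`
    have hpt : ∀ ε > 0, ∀ᶠ y in 𝓝 x,
        |(u y + χ y * T y) + g0 * η y - g x| ≤ 3 * |u y - (g x - g0)| + ε := by
      intro ε hε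
      have hη1 : ∀ᶠ y in 𝓝 x, η y = 1 := by
        filter_upwards [Metric.isOpen_ball.mem_nhds (hR (frontier_subset_closure hx))] with y hy
        exact bmp_eq_one hR0 (le_of_lt hy)
      have hχT : ∀ᶠ y in 𝓝 x, |χ y * T y| ≤ 2 * |u y - (g x - g0)| + ε := by
        rcases lt_or_ge (dist x x₀) (δ 0) with hx0 | hx0
        · have hcl : ∀ᶠ y in 𝓝 x, |h y - h x| < ε :=
            (Metric.continuous_iff'.1 hhc x ε hε)
          filter_upwards [hcl] with y hy
          have h1 := clamp_bound (u := u y) (hh0 y) (hgh x hx hx0)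
          rw [← hT y] at h1
          rw [abs_mul]
          calc |χ y| * |T y| ≤ |T y| := mul_le_of_le_one_left (abs_nonneg _) (hχ1 y)
            _ ≤ _ := by linarith
        · have hfar : ∀ᶠ y in 𝓝 x, 2 * ρ < dist y x₀ :=
            (continuous_id.dist continuous_const).continuousAt.eventually_const_lt
              (by simp only [id]; linarith [hδ0 0])
          filter_upwards [hfar] with y hy
          rw [show χ y = 0 from bmp_eq_zero hρ0 hy.le]
          simp only [zero_mul, abs_zero]
          positivity
      filter_upwards [hη1, hχT] with y h1 h2
      rw [h1, show u y + χ y * T y + g0 * 1 - g x = (u y - (g x - g0)) + χ y * T y by ring]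
      have := abs_add_le (u y - (g x - g0)) (χ y * T y)
      linarith
    rw [Metric.tendsto_nhdsWithin_nhds] at hux ⊢
    intro ε hε
    obtain ⟨d1, hd1, hd1'⟩ := hux (ε / 8) (by positivity)
    obtain ⟨d2, hd2, hd2'⟩ := Metric.eventually_nhds_iff.1 (hpt (ε / 4) (by positivity))
    refine ⟨min d1 d2, lt_min hd1 hd2, fun {r} hr hrd => ?_⟩
    have hr0 : 0 < r := hr
    have hrabs : r < min d1 d2 := by
      rwa [Real.dist_eq, sub_zero, abs_of_pos hr0] at hrd
    have h1 := hd1' hr (hrd.trans_le (min_le_left _ _))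
    set S := Metric.ball x r ∩ U with hS
    have hSm : MeasurableSet S := Metric.isOpen_ball.measurableSet.inter hU.measurableSet
    have hSfin : volume S < ⊤ := (measure_mono inter_subset_left).trans_lt measure_ball_lt_top
    have : IsFiniteMeasure (volume.restrict S) := ⟨by simpa using hSfin⟩
    have hSU : S ⊆ U := inter_subset_right
    have hdist : ∀ a b : ℝ, 0 ≤ a → 0 ≤ b → dist (a / b) 0 = a / b := fun a b ha hb => by
      rw [Real.dist_eq, sub_zero, abs_of_nonneg (div_nonneg ha hb)]
    rw [hdist _ _ (integral_nonneg fun y => abs_nonneg _) ENNReal.toReal_nonneg] at h1 ⊢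
    have hi1 : Integrable (fun y => |u y - (g x - g0)|) (volume.restrict S) :=
      ((hui.mono_set hSU).integrable.sub (integrable_const _)).norm
    have hint : (∫ y in S, |(u y + χ y * T y) + g0 * η y - g x|)
        ≤ 3 * (∫ y in S, |u y - (g x - g0)|) + (ε / 4) * (volume S).toReal := by
      have e : 3 * (∫ y in S, |u y - (g x - g0)|) + (ε / 4) * (volume S).toReal
          = ∫ y in S, (3 * |u y - (g x - g0)| + ε / 4) := by
        rw [integral_add (hi1.const_mul 3) (integrable_const _), integral_const_mul]
        simp [Measure.real, mul_comm]
      rw [e]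
      refine integral_mono_of_nonneg (Eventually.of_forall fun y => abs_nonneg _)
        ((hi1.const_mul 3).add (integrable_const _)) ?_
      refine (ae_restrict_iff' hSm).2 (Eventually.of_forall fun y hy => ?_)
      exact hd2' (lt_of_lt_of_le hy.1 (hrabs.le.trans (min_le_right _ _)))
    rcases (ENNReal.toReal_nonneg (a := volume S)).eq_or_lt with h0 | h0
    · rw [← h0, div_zero]; exact hε
    · rw [div_lt_iff₀ h0] at h1 ⊢
      nlinarith
  · -- the essential supremum
    rw [Metric.tendsto_nhdsWithin_nhds]
    intro ε hε
    obtain ⟨d, hd, hd'⟩ := Metric.continuous_iff.1 hhc x₀ (ε / 2) (by positivity)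
    refine ⟨min d (min ρ R), lt_min hd (lt_min hρ0 hR0), fun {r} hr hrd => ?_⟩
    have hr0 : 0 < r := hr
    rw [Real.dist_eq, sub_zero, abs_of_pos hr0, lt_min_iff, lt_min_iff] at hrd
    obtain ⟨hrd1, hrd2, hrd3⟩ := hrd
    set μ := (volume : Measure (EuclideanSpace ℝ (Fin N))).restrict (Metric.ball x₀ r \ closure Ω)
      with hμ
    have hae : ∀ᵐ y ∂μ, |(u y + χ y * T y) + g0 * η y - g0| ≤ ε / 2 := by
      refine (ae_restrict_iff' (Metric.isOpen_ball.measurableSet.diff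
        isClosed_closure.measurableSet)).2 (Eventually.of_forall fun y hy => ?_)
      have hyd : dist y x₀ < r := hy.1
      rw [show η y = 1 from bmp_eq_one hR0 (by linarith),
        show χ y = 1 from bmp_eq_one hρ0 (by linarith), hT y,
        show u y + 1 * ((|u y + h y| - |u y - h y|) / 2 - u y) + g0 * 1 - g0
          = (|u y + h y| - |u y - h y|) / 2 by ring]
      refine (clamp_le (hh0 y)).trans ?_
      have := hd' y (hyd.trans hrd1)
      rw [hhx₀, Real.dist_eq, sub_zero] at this
      exact (le_abs_self _).trans this.le
    rw [essSup_eq_sInf, Real.dist_eq, sub_zero]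
    have hmem : ε / 2 ∈ {a : ℝ | μ {y | a < |(u y + χ y * T y) + g0 * η y - g0|} = 0} := by
      have := ae_iff.1 hae
      simpa only [not_le, mem_ofPred_eq] using this
    rcases eq_or_ne μ 0 with hμ0 | hμ0
    · rw [hμ0]
      have : {a : ℝ | (0 : Measure (EuclideanSpace ℝ (Fin N)))
          {y | a < |(u y + χ y * T y) + g0 * η y - g0|} = 0} = univ := by simp
      rw [this, Real.sInf_univ]
      simpa using hε
    · have hlow : ∀ a ∈ {a : ℝ | μ {y | a < |(u y + χ y * T y) + g0 * η y - g0|} = 0}, 0 ≤ a := by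
        intro a ha
        by_contra hneg
        push Not at hneg
        apply hμ0
        rw [← Measure.measure_univ_eq_zero]
        refine measure_mono_null (fun y _ => ?_) ha
        exact hneg.trans_le (abs_nonneg _)
      have h1 := csInf_le ⟨0, hlow⟩ hmem
      have h2 := Real.sInf_nonneg hlow
      rw [abs_of_nonneg h2]
      linarith
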